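/- For each k ∈ {3, 4, 5, 6, 7}, there exists a 1-perfect code C in F_3^{13} such that the affine span of C equals F_3^{13} (C is full-rank) and the kernel ker(C) has F_3-dimension k. -/

import Mathlib

/-- `(U, V)` is a tiling of the ambient space `S`: every element of `S` is uniquely
represented as the sum of an element of `U` and an element of `V`. -/
def IsTiling {S : Type*} [AddCommGroup S] (U V : Set S) : Prop :=
  ∀ s : S, ∃! p : S × S, p.1 ∈ U ∧ p.2 ∈ V ∧ p.1 + p.2 = s

/-- The radius-1 Hamming ball centered at 0: vectors with at most one nonzero coordinate. -/
def hammingBall1 (F : Type*) [Zero F] (N : ℕ) : Set (Fin N → F) :=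
  {c | {j | c j ≠ 0}.Subsingleton}

/-- The set of periods of `X`: vectors `w` with `X + w = X`. -/
def periods {S : Type*} [AddCommGroup S] (X : Set S) : Set S :=
  {w | (fun v => v + w) '' X = X}

/-- The kernel of `X` (as a set): vectors all of whose scalar multiples are periods of `X`.
This is the maximal `F`-subspace contained in `periods X`. -/
def kerSet (F : Type*) {S : Type*} [CommRing F] [AddCommGroup S] [Module F S]
    (X : Set S) : Set S :=
  {w | ∀ a : F, a • w ∈ periods X}

/-- The dimension of the kernel of `X` (the kernel set is a subspace, so spanning it
does not change it). -/
noncomputable def kerDim (F : Type*) {S : Type*} [CommRing F] [AddCommGroup S] [Module F S]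
    (X : Set S) : ℕ :=
  Module.finrank F (Submodule.span F (kerSet F X))

namespace TernaryPerfect

/-- The ternary function `y² + (1 + e y²) m`; for `e ∈ {0, 1}` it is a permutation in `m`. -/
def twist (e y m : ZMod 3) : ZMod 3 := y ^ 2 + (1 + e * y ^ 2) * m

/-- First component of the syndrome. The coordinates `4, …, 12` form three blocks of length
three; each enters through the sum of its entries and the difference of the last two. -/
def syn₁ (e₀ e₁ : ZMod 3) (x : Fin 13 → ZMod 3) : ZMod 3 :=
  x 0 + x 1 - (1 + e₀ * (x 4 + x 5 + x 6 - 1) ^ 2) * (x 2 + x 3)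
    - twist e₁ (x 4 + x 5 + x 6) (x 5 - x 6) - (x 10 + x 11 + x 12)

/-- Second component of the syndrome. -/
def syn₂ (e₂ : ZMod 3) (x : Fin 13 → ZMod 3) : ZMod 3 :=
  x 0 - x 1 + x 2 - x 3 - twist e₂ (x 7 + x 8 + x 9) (x 8 - x 9) - (x 4 + x 5 + x 6)

/-- Third component of the syndrome. -/
def syn₃ (e₃ : ZMod 3) (x : Fin 13 → ZMod 3) : ZMod 3 :=
  x 0 - x 1 - x 2 + x 3 - twist e₃ (x 10 + x 11 + x 12) (x 11 - x 12) - (x 7 + x 8 + x 9)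

/-- The code of vectors with zero syndrome. -/
def code (e₀ e₁ e₂ e₃ : ZMod 3) : Set (Fin 13 → ZMod 3) :=
  {x | syn₁ e₀ e₁ x = 0 ∧ syn₂ e₂ x = 0 ∧ syn₃ e₃ x = 0}

theorem single_mem_hammingBall1 (j : Fin 13) (a : ZMod 3) :
    Pi.single j a ∈ hammingBall1 (ZMod 3) 13 := by
  intro i hi k hk
  have h : ∀ l, (Pi.single j a : Fin 13 → ZMod 3) l ≠ 0 → l = j := fun l hl => by
    by_contra hne
    exact hl (by simp [hne])
  rw [h i hi, h k hk]

theorem exists_eq_single {v : Fin 13 → ZMod 3} (hv : v ∈ hammingBall1 (ZMod 3) 13) :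
    ∃ j a, v = Pi.single j a := by
  by_cases h : ∃ j, v j ≠ 0
  · obtain ⟨j, hj⟩ := h
    refine ⟨j, v j, funext fun i => ?_⟩
    by_cases hij : i = j
    · subst hij; simp
    · rw [Pi.single_eq_of_ne hij]
      by_contra hi
      exact hij (hv hi hj)
  · push Not at h
    exact ⟨0, 0, funext fun i => by simp [h i]⟩

theorem card_hammingBall1_le : Nat.card (hammingBall1 (ZMod 3) 13) ≤ 27 := by
  let f : Option (Fin 13 × Bool) → hammingBall1 (ZMod 3) 13 := fun o =>
    match o with
    | none => ⟨Pi.single 0 0, single_mem_hammingBall1 _ _⟩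
    | some (j, b) => ⟨Pi.single j (cond b 1 2), single_mem_hammingBall1 _ _⟩
  have hf : Function.Surjective f := by
    rintro ⟨v, hv⟩
    obtain ⟨j, a, rfl⟩ := exists_eq_single hv
    have ha : a = 0 ∨ a = 1 ∨ a = 2 := by
      clear hv
      revert a
      decide
    rcases ha with rfl | rfl | rfl
    · exact ⟨none, Subtype.ext (by simp [f])⟩
    · exact ⟨some (j, true), rfl⟩
    · exact ⟨some (j, false), rfl⟩
  simpa using Nat.card_le_card_of_surjective f hf

theorem card_code_le (e₀ e₁ e₂ e₃ : ZMod 3) : Nat.card (code e₀ e₁ e₂ e₃) ≤ 3 ^ 10 := by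
  let f : code e₀ e₁ e₂ e₃ → (Fin 10 → ZMod 3) := fun c i => c.1 (Fin.natAdd 3 i)
  have hf : Function.Injective f := by
    rintro ⟨x, h₁, h₂, h₃⟩ ⟨x', h₁', h₂', h₃'⟩ h
    have hr : ∀ i : Fin 10, x (Fin.natAdd 3 i) = x' (Fin.natAdd 3 i) := fun i => congrFun h i
    have q3 : x 3 = x' 3 := hr 0
    have q4 : x 4 = x' 4 := hr 1
    have q5 : x 5 = x' 5 := hr 2
    have q6 : x 6 = x' 6 := hr 3
    have q7 : x 7 = x' 7 := hr 4
    have q8 : x 8 = x' 8 := hr 5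
    have q9 : x 9 = x' 9 := hr 6
    have q10 : x 10 = x' 10 := hr 7
    have q11 : x 11 = x' 11 := hr 8
    have q12 : x 12 = x' 12 := hr 9
    simp only [syn₁, syn₂, syn₃, q3, q4, q5, q6, q7, q8, q9, q10, q11, q12] at h₁ h₂ h₃ h₁' h₂' h₃'
    have h3 : (3 : ZMod 3) = 0 := rfl
    have q2 : x 2 = x' 2 := by
      linear_combination h₃ - h₃' - (h₂ - h₂') + (x 2 - x' 2) * h3
    simp only [q2] at h₁ h₂
    have q0 : x 0 = x' 0 := by
      linear_combination -(h₁ - h₁') - (h₂ - h₂') + (x 0 - x' 0) * h3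
    have q1 : x 1 = x' 1 := by
      linear_combination h₁ - h₁' - q0
    refine Subtype.ext (funext fun i => ?_)
    fin_cases i <;> assumption
  simpa using Nat.card_le_card_of_injective f hf

theorem exists_twist_eq {e : ZMod 3} (he : e = 0 ∨ e = 1) (y m a k : ZMod 3) (ha : a ≠ 0) :
    twist e y m = k ∨ twist e y (m - a) = k ∨ twist e y (m + a) = k := by
  revert e y m a k
  decide

theorem syndrome_cases (d₁ d₂ d₃ : ZMod 3) :
    (d₁ = 0 ∧ d₂ = 0 ∧ d₃ = 0) ∨ (d₃ = 0 ∧ d₂ ≠ 0) ∨ (d₁ = 0 ∧ d₃ ≠ 0) ∨ (d₂ = 0 ∧ d₁ ≠ 0) ∨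
      (d₁ ≠ 0 ∧ d₂ ≠ 0 ∧ d₃ ≠ 0) := by
  tauto

theorem exists_signs {e : ZMod 3} (he : e = 0 ∨ e = 1) (y : ZMod 3) {d₁ d₂ d₃ : ZMod 3}
    (hd : d₁ ≠ 0 ∧ d₂ ≠ 0 ∧ d₃ ≠ 0) :
    ∃ a, (d₁ = a ∧ d₂ = a ∧ d₃ = a) ∨ (d₁ = a ∧ d₂ = -a ∧ d₃ = -a) ∨
      (d₁ = -((1 + e * (y - 1) ^ 2) * a) ∧ d₂ = a ∧ d₃ = -a) ∨
      (d₁ = -((1 + e * (y - 1) ^ 2) * a) ∧ d₂ = -a ∧ d₃ = a) := by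
  revert e y d₁ d₂ d₃
  decide

theorem exists_sub_single_mem_code {e₀ e₁ e₂ e₃ : ZMod 3} (h₀ : e₀ = 0 ∨ e₀ = 1)
    (h₁ : e₁ = 0 ∨ e₁ = 1) (h₂ : e₂ = 0 ∨ e₂ = 1) (h₃ : e₃ = 0 ∨ e₃ = 1)
    (s : Fin 13 → ZMod 3) : ∃ j a, s - Pi.single j a ∈ code e₀ e₁ e₂ e₃ := by
  obtain ⟨d₁, hd₁⟩ : ∃ d, syn₁ e₀ e₁ s = d := ⟨_, rfl⟩
  obtain ⟨d₂, hd₂⟩ : ∃ d, syn₂ e₂ s = d := ⟨_, rfl⟩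
  obtain ⟨d₃, hd₃⟩ : ∃ d, syn₃ e₃ s = d := ⟨_, rfl⟩
  simp only [syn₁, syn₂, syn₃, twist] at hd₁ hd₂ hd₃
  rcases syndrome_cases d₁ d₂ d₃ with ⟨rfl, rfl, rfl⟩ | ⟨rfl, h⟩ | ⟨rfl, h⟩ | ⟨rfl, h⟩ | h
  · refine ⟨0, 0, ?_⟩
    simpa [code, syn₁, syn₂, syn₃, twist] using ⟨hd₁, hd₂, hd₃⟩
  · rcases exists_twist_eq h₁ (s 4 + s 5 + s 6 + d₂) (s 5 - s 6) (-d₂)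
      (s 0 + s 1 - (1 + e₀ * (s 4 + s 5 + s 6 + d₂ - 1) ^ 2) * (s 2 + s 3)
        - (s 10 + s 11 + s 12)) (neg_ne_zero.2 h) with ht | ht | ht
    · refine ⟨4, -d₂, ?_⟩
      simp only [twist] at ht
      simp [code, syn₁, syn₂, syn₃, twist]
      exact ⟨by linear_combination -ht, by linear_combination hd₂, by linear_combination hd₃⟩
    · refine ⟨5, -d₂, ?_⟩
      simp only [twist] at ht
      simp [code, syn₁, syn₂, syn₃, twist]
      exact ⟨by linear_combination -ht, by linear_combination hd₂, by linear_combination hd₃⟩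
    · refine ⟨6, -d₂, ?_⟩
      simp only [twist] at ht
      simp [code, syn₁, syn₂, syn₃, twist]
      exact ⟨by linear_combination -ht, by linear_combination hd₂, by linear_combination hd₃⟩
  · rcases exists_twist_eq h₂ (s 7 + s 8 + s 9 + d₃) (s 8 - s 9) (-d₃)
      (s 0 - s 1 + s 2 - s 3 - (s 4 + s 5 + s 6)) (neg_ne_zero.2 h) with ht | ht | ht
    · refine ⟨7, -d₃, ?_⟩
      simp only [twist] at ht
      simp [code, syn₁, syn₂, syn₃, twist]
      exact ⟨by linear_combination hd₁, by linear_combination -ht, by linear_combination hd₃⟩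
    · refine ⟨8, -d₃, ?_⟩
      simp only [twist] at ht
      simp [code, syn₁, syn₂, syn₃, twist]
      exact ⟨by linear_combination hd₁, by linear_combination -ht, by linear_combination hd₃⟩
    · refine ⟨9, -d₃, ?_⟩
      simp only [twist] at ht
      simp [code, syn₁, syn₂, syn₃, twist]
      exact ⟨by linear_combination hd₁, by linear_combination -ht, by linear_combination hd₃⟩
  · rcases exists_twist_eq h₃ (s 10 + s 11 + s 12 + d₁) (s 11 - s 12) (-d₁)
      (s 0 - s 1 - s 2 + s 3 - (s 7 + s 8 + s 9)) (neg_ne_zero.2 h) with ht | ht | ht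
    · refine ⟨10, -d₁, ?_⟩
      simp only [twist] at ht
      simp [code, syn₁, syn₂, syn₃, twist]
      exact ⟨by linear_combination hd₁, by linear_combination hd₂, by linear_combination -ht⟩
    · refine ⟨11, -d₁, ?_⟩
      simp only [twist] at ht
      simp [code, syn₁, syn₂, syn₃, twist]
      exact ⟨by linear_combination hd₁, by linear_combination hd₂, by linear_combination -ht⟩
    · refine ⟨12, -d₁, ?_⟩
      simp only [twist] at ht
      simp [code, syn₁, syn₂, syn₃, twist]
      exact ⟨by linear_combination hd₁, by linear_combination hd₂, by linear_combination -ht⟩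
  · obtain ⟨a, ⟨q₁, q₂, q₃⟩ | ⟨q₁, q₂, q₃⟩ | ⟨q₁, q₂, q₃⟩ | ⟨q₁, q₂, q₃⟩⟩ :=
      exists_signs h₀ (s 4 + s 5 + s 6) h
    · refine ⟨0, a, ?_⟩
      simp [code, syn₁, syn₂, syn₃, twist]
      exact ⟨by linear_combination hd₁ + q₁, by linear_combination hd₂ + q₂,
        by linear_combination hd₃ + q₃⟩
    · refine ⟨1, a, ?_⟩
      simp [code, syn₁, syn₂, syn₃, twist]
      exact ⟨by linear_combination hd₁ + q₁, by linear_combination hd₂ + q₂,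
        by linear_combination hd₃ + q₃⟩
    · refine ⟨2, a, ?_⟩
      simp [code, syn₁, syn₂, syn₃, twist]
      exact ⟨by linear_combination hd₁ + q₁, by linear_combination hd₂ + q₂,
        by linear_combination hd₃ + q₃⟩
    · refine ⟨3, a, ?_⟩
      simp [code, syn₁, syn₂, syn₃, twist]
      exact ⟨by linear_combination hd₁ + q₁, by linear_combination hd₂ + q₂,
        by linear_combination hd₃ + q₃⟩

theorem isTiling_code {e₀ e₁ e₂ e₃ : ZMod 3} (h₀ : e₀ = 0 ∨ e₀ = 1)
    (h₁ : e₁ = 0 ∨ e₁ = 1) (h₂ : e₂ = 0 ∨ e₂ = 1) (h₃ : e₃ = 0 ∨ e₃ = 1) :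
    IsTiling (hammingBall1 (ZMod 3) 13) (code e₀ e₁ e₂ e₃) := by
  let f : hammingBall1 (ZMod 3) 13 × code e₀ e₁ e₂ e₃ → (Fin 13 → ZMod 3) :=
    fun p => p.1.1 + p.2.1
  have hsurj : Function.Surjective f := fun s => by
    obtain ⟨j, a, h⟩ := exists_sub_single_mem_code h₀ h₁ h₂ h₃ s
    exact ⟨(⟨_, single_mem_hammingBall1 j a⟩, ⟨_, h⟩), add_sub_cancel _ _⟩
  have hcard : Nat.card (hammingBall1 (ZMod 3) 13 × code e₀ e₁ e₂ e₃) ≤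
      Nat.card (Fin 13 → ZMod 3) := by
    rw [Nat.card_prod]
    calc _ ≤ 27 * 3 ^ 10 := Nat.mul_le_mul card_hammingBall1_le (card_code_le e₀ e₁ e₂ e₃)
      _ = _ := by simp
  have hinj := (hsurj.bijective_of_nat_card_le hcard).injective
  intro s
  obtain ⟨⟨u, v⟩, huv⟩ := hsurj s
  refine ⟨(u.1, v.1), ⟨u.2, v.2, huv⟩, ?_⟩
  rintro ⟨u', v'⟩ ⟨hu', hv', h'⟩
  have h := @hinj (⟨u', hu'⟩, ⟨v', hv'⟩) (u, v) (h'.trans huv.symm)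
  exact congrArg (fun p => (p.1.1, p.2.1)) h

/-- The linear functionals cutting out the kernels of the codes. -/
def checkMap : (Fin 13 → ZMod 3) →ₗ[ZMod 3] (Fin 10 → ZMod 3) where
  toFun x := ![x 4 + x 5 + x 6, x 7 + x 8 + x 9, x 10 + x 11 + x 12,
    x 0 + x 1 - x 2 - x 3 - (x 5 - x 6), x 0 - x 1 + x 2 - x 3 - (x 8 - x 9),
    x 0 - x 1 - x 2 + x 3 - (x 11 - x 12), x 5 - x 6, x 8 - x 9, x 11 - x 12, x 2 + x 3]
  map_add' x y := by
    funext i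
    fin_cases i <;> simp <;> ring
  map_smul' a x := by
    funext i
    fin_cases i <;> simp <;> ring

theorem checkMap_surjective : Function.Surjective checkMap := by
  intro z
  have h3 : (3 : ZMod 3) = 0 := rfl
  let p := -(z 4 + z 7 + (z 5 + z 8))
  let q := -(z 4 + z 7 - (z 5 + z 8))
  refine ⟨![-(z 3 + z 6 + z 9 + p), -(z 3 + z 6 + z 9 - p), -(z 9 + q), -(z 9 - q),
    z 0 - z 6, z 6, 0, z 1 - z 7, z 7, 0, z 2 - z 8, z 8, 0], funext fun i => ?_⟩
  fin_cases i <;> simp [checkMap, p, q]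
  · linear_combination -(z 3 + z 6) * h3
  · linear_combination (z 4 + z 7) * h3
  · linear_combination (z 5 + z 8) * h3
  · linear_combination -(z 9) * h3

theorem finrank_ker_checkMap {r : ℕ} (hr : r ≤ 10) :
    Module.finrank (ZMod 3)
      (LinearMap.ker (LinearMap.funLeft (ZMod 3) (ZMod 3) (Fin.castLE hr) ∘ₗ checkMap)) =
      13 - r := by
  have hs : Function.Surjective
      (LinearMap.funLeft (ZMod 3) (ZMod 3) (Fin.castLE hr) ∘ₗ checkMap) := by
    rw [LinearMap.coe_comp]
    exact (LinearMap.funLeft_surjective_of_injective _ _ _ (Fin.castLE_injective hr)).comp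
      checkMap_surjective
  have h := LinearMap.finrank_range_add_finrank_ker
    (LinearMap.funLeft (ZMod 3) (ZMod 3) (Fin.castLE hr) ∘ₗ checkMap)
  rw [LinearMap.range_eq_top.2 hs, finrank_top] at h
  simp only [Module.finrank_fin_fun] at h
  omega

/-- A codeword with prescribed block sums `yᵢ` and block differences `mᵢ`. -/
def word (e₁ e₂ e₃ y₁ y₂ y₃ m₁ m₂ m₃ : ZMod 3) : Fin 13 → ZMod 3 :=
  let t := twist e₁ y₁ m₁ + y₃
  let u := twist e₂ y₂ m₂ + y₁
  let v := twist e₃ y₃ m₃ + y₂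
  ![u + v - t, -(t + u + v), u - v, v - u,
    y₁ - m₁, m₁, 0, y₂ - m₂, m₂, 0, y₃ - m₃, m₃, 0]

theorem word_mem_code (e₀ e₁ e₂ e₃ y₁ y₂ y₃ m₁ m₂ m₃ : ZMod 3) :
    word e₁ e₂ e₃ y₁ y₂ y₃ m₁ m₂ m₃ ∈ code e₀ e₁ e₂ e₃ := by
  have h3 : (3 : ZMod 3) = 0 := rfl
  simp [code, syn₁, syn₂, syn₃, word]
  refine ⟨?_, ?_, ?_⟩
  · linear_combination -(twist e₁ y₁ m₁ + y₃) * h3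
  · linear_combination (twist e₂ y₂ m₂ + y₁) * h3
  · linear_combination (twist e₃ y₃ m₃ + y₂) * h3

theorem affineSpan_code (e₀ e₁ e₂ e₃ : ZMod 3) :
    affineSpan (ZMod 3) (code e₀ e₁ e₂ e₃) = ⊤ := by
  have hzero : (0 : Fin 13 → ZMod 3) ∈ code e₀ e₁ e₂ e₃ := by
    simp [code, syn₁, syn₂, syn₃, twist]
  rw [AffineSubspace.affineSpan_eq_top_iff_vectorSpan_eq_top_of_nonempty _ _ _ ⟨0, hzero⟩]
  by_contra hne
  obtain ⟨f, hf0, hf⟩ := Submodule.exists_le_ker_of_lt_top _ (lt_top_iff_ne_top.2 hne)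
  obtain ⟨g, hg⟩ : ∃ g : Fin 13 → ZMod 3, ∀ j, f (Pi.single j 1) = g j := ⟨_, fun _ => rfl⟩
  have hsum : ∀ c ∈ code e₀ e₁ e₂ e₃, ∑ j, c j * g j = 0 := fun c hc => by
    have h : f c = 0 := hf (by simpa using vsub_mem_vectorSpan (ZMod 3) hc hzero)
    rw [← h]
    conv_rhs => rw [← Finset.univ_sum_single c, map_sum]
    refine Finset.sum_congr rfl fun j _ => ?_
    rw [← hg, ← smul_eq_mul, ← map_smul, ← Pi.single_smul, smul_eq_mul, mul_one]
  have expand (c : Fin 13 → ZMod 3) : ∑ j, c j * g j =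
      c 0 * g 0 + c 1 * g 1 + c 2 * g 2 + c 3 * g 3 + (c 4 * g 4 + c 5 * g 5 + c 6 * g 6) +
        (c 7 * g 7 + c 8 * g 8 + c 9 * g 9) + (c 10 * g 10 + c 11 * g 11 + c 12 * g 12) := by
    simp only [Fin.sum_univ_castSucc, Fin.sum_univ_zero]
    ring!
  simp only [expand] at hsum
  have hw (y₁ y₂ y₃ m₁ m₂ m₃) := hsum _ (word_mem_code e₀ e₁ e₂ e₃ y₁ y₂ y₃ m₁ m₂ m₃)
  have hs := hsum ![1 + e₀, 1 + e₀, 1, 1, 0, 0, 0, 0, 0, 0, 0, 0, 0] (by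
    simp [code, syn₁, syn₂, syn₃, twist]; ring)
  have ho₁ := hsum ![0, 0, 0, 0, 1, 1, 1, 0, 0, 0, 0, 0, 0] (by
    simp [code, syn₁, syn₂, syn₃, twist]; decide)
  have ho₂ := hsum ![0, 0, 0, 0, 0, 0, 0, 1, 1, 1, 0, 0, 0] (by
    simp [code, syn₁, syn₂, syn₃, twist]; decide)
  have ho₃ := hsum ![0, 0, 0, 0, 0, 0, 0, 0, 0, 0, 1, 1, 1] (by
    simp [code, syn₁, syn₂, syn₃, twist]; decide)
  have a₁ := hw 1 0 0 0 0 0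
  have a₂ := hw 0 1 0 0 0 0
  have a₃ := hw 0 0 1 0 0 0
  have b₁ := hw (-1) 0 0 0 0 0
  have b₂ := hw 0 (-1) 0 0 0 0
  have b₃ := hw 0 0 (-1) 0 0 0
  have c₁ := hw 0 0 0 1 0 0
  have c₂ := hw 0 0 0 0 1 0
  have c₃ := hw 0 0 0 0 0 1
  simp [word, twist] at hs ho₁ ho₂ ho₃ a₁ a₂ a₃ b₁ b₂ b₃ c₁ c₂ c₃
  have h3 : (3 : ZMod 3) = 0 := rfl
  refine hf0 (LinearMap.pi_ext' fun j => LinearMap.ext_ring ?_)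
  simp only [LinearMap.coe_comp, LinearMap.coe_single, Function.comp_apply, hg,
    LinearMap.zero_comp, LinearMap.zero_apply]
  have g0 : g 0 = 0 := by
    linear_combination -(a₁ + b₁ + a₂ + b₂ + a₃ + b₃) + (g 0 - 2 * g 1) * h3
  have g1 : g 1 = 0 := by linear_combination a₁ + b₁ + 2 * g0 + g 1 * h3
  have g2 : g 2 = 0 := by
    linear_combination a₂ + b₂ - 2 * g0 + 2 * g1 + 2 * (hs - (1 + e₀) * (g0 + g1)) - g 2 * h3
  have g3 : g 3 = 0 := by linear_combination hs - (1 + e₀) * (g0 + g1) - g2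
  have g4 : g 4 = 0 := by linear_combination a₁ + 2 * g1 - g2 + g3
  have g7 : g 7 = 0 := by linear_combination a₂ - 2 * g0 + 2 * g1
  have g10 : g 10 = 0 := by linear_combination a₃ + 2 * g1 + g2 - g3
  have g5 : g 5 = 0 := by linear_combination c₁ + g0 + g1 + g4
  have g8 : g 8 = 0 := by linear_combination c₂ - g0 + g1 - g2 + g3 + g7
  have g11 : g 11 = 0 := by linear_combination c₃ - g0 + g1 + g2 - g3 + g10
  have g6 : g 6 = 0 := by linear_combination ho₁ - g4 - g5
  have g9 : g 9 = 0 := by linear_combination ho₂ - g7 - g8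
  have g12 : g 12 = 0 := by linear_combination ho₃ - g10 - g11
  fin_cases j <;> assumption

theorem eq_zero_of_forall_twist {e₀ e : ZMod 3} (h₀ : e₀ = 0 ∨ e₀ = 1)
    (h : e = 0 ∨ e = 1) (b n k a : ZMod 3)
    (H : ∀ y m, k - (1 + e₀ * (y + b - 1) ^ 2) * a = twist e (y + b) (m + n) - twist e y m) :
    b = 0 ∧ k - a = n ∧ e * n = 0 ∧ e₀ * a = 0 := by
  rcases h₀ with rfl | rfl <;> rcases h with rfl | rfl <;> revert b n k a <;> decide

theorem add_mem_code {e₀ e₁ e₂ e₃ : ZMod 3} {p c : Fin 13 → ZMod 3}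
    (hp : ∀ i : Fin 6, checkMap p (Fin.castLE (by simp) i) = 0)
    (hp₁ : e₁ * checkMap p 6 = 0) (hp₂ : e₂ * checkMap p 7 = 0) (hp₃ : e₃ * checkMap p 8 = 0)
    (hp₀ : e₀ * checkMap p 9 = 0) (hc : c ∈ code e₀ e₁ e₂ e₃) : c + p ∈ code e₀ e₁ e₂ e₃ := by
  have b₁ : p 4 + p 5 + p 6 = 0 := hp 0
  have b₂ : p 7 + p 8 + p 9 = 0 := hp 1
  have b₃ : p 10 + p 11 + p 12 = 0 := hp 2
  have k₁ : p 0 + p 1 - p 2 - p 3 - (p 5 - p 6) = 0 := hp 3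
  have k₂ : p 0 - p 1 + p 2 - p 3 - (p 8 - p 9) = 0 := hp 4
  have k₃ : p 0 - p 1 - p 2 + p 3 - (p 11 - p 12) = 0 := hp 5
  have n₁ : e₁ * (p 5 - p 6) = 0 := hp₁
  have n₂ : e₂ * (p 8 - p 9) = 0 := hp₂
  have n₃ : e₃ * (p 11 - p 12) = 0 := hp₃
  have n₀ : e₀ * (p 2 + p 3) = 0 := hp₀
  have q4 : p 4 = -p 5 - p 6 := by linear_combination b₁
  have q7 : p 7 = -p 8 - p 9 := by linear_combination b₂
  have q10 : p 10 = -p 11 - p 12 := by linear_combination b₃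
  obtain ⟨h₁, h₂, h₃⟩ := hc
  simp only [syn₁, syn₂, syn₃, twist] at h₁ h₂ h₃
  refine ⟨?_, ?_, ?_⟩ <;> simp only [syn₁, syn₂, syn₃, twist, Pi.add_apply, q4, q7, q10]
  · linear_combination h₁ + k₁ - (c 4 + c 5 + c 6 - 1) ^ 2 * n₀ - (c 4 + c 5 + c 6) ^ 2 * n₁
  · linear_combination h₂ + k₂ - (c 7 + c 8 + c 9) ^ 2 * n₂
  · linear_combination h₃ + k₃ - (c 10 + c 11 + c 12) ^ 2 * n₃

theorem checkMap_of_add_mem_code {e₀ e₁ e₂ e₃ : ZMod 3} (h₀ : e₀ = 0 ∨ e₀ = 1)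
    (h₁ : e₁ = 0 ∨ e₁ = 1) (h₂ : e₂ = 0 ∨ e₂ = 1) (h₃ : e₃ = 0 ∨ e₃ = 1)
    {p : Fin 13 → ZMod 3} (H : ∀ c ∈ code e₀ e₁ e₂ e₃, c + p ∈ code e₀ e₁ e₂ e₃) :
    (∀ i : Fin 6, checkMap p (Fin.castLE (by simp) i) = 0) ∧
      e₁ * checkMap p 6 = 0 ∧ e₂ * checkMap p 7 = 0 ∧ e₃ * checkMap p 8 = 0 ∧
      e₀ * checkMap p 9 = 0 := by
  have h3 : (3 : ZMod 3) = 0 := rfl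
  obtain ⟨b₁, k₁, n₁, n₀⟩ := eq_zero_of_forall_twist h₀ h₁ (p 4 + p 5 + p 6) (p 5 - p 6)
    (p 0 + p 1 - (p 10 + p 11 + p 12)) (p 2 + p 3) fun y m => by
      have h := (H _ (word_mem_code e₀ e₁ e₂ e₃ y 0 0 m 0 0)).1
      simp [syn₁, word, twist] at h
      simp only [twist]
      linear_combination h + (y ^ 2 + (1 + e₁ * y ^ 2) * m) * h3
  obtain ⟨b₂, k₂, n₂, -⟩ := eq_zero_of_forall_twist (.inl rfl) h₂ (p 7 + p 8 + p 9) (p 8 - p 9)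
    (p 0 - p 1 + p 2 - p 3 - (p 4 + p 5 + p 6)) 0 fun y m => by
      have h := (H _ (word_mem_code e₀ e₁ e₂ e₃ 0 y 0 0 m 0)).2.1
      simp [syn₂, word, twist] at h
      simp only [twist]
      linear_combination h - (y ^ 2 + (1 + e₂ * y ^ 2) * m) * h3
  obtain ⟨b₃, k₃, n₃, -⟩ := eq_zero_of_forall_twist (.inl rfl) h₃ (p 10 + p 11 + p 12)
    (p 11 - p 12) (p 0 - p 1 - p 2 + p 3 - (p 7 + p 8 + p 9)) 0 fun y m => by
      have h := (H _ (word_mem_code e₀ e₁ e₂ e₃ 0 0 y 0 0 m)).2.2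
      simp [syn₃, word, twist] at h
      simp only [twist]
      linear_combination h - (y ^ 2 + (1 + e₃ * y ^ 2) * m) * h3
  refine ⟨fun i => ?_, n₁, n₂, n₃, n₀⟩
  have c₁ : p 0 + p 1 - p 2 - p 3 - (p 5 - p 6) = 0 := by linear_combination k₁ + b₃
  have c₂ : p 0 - p 1 + p 2 - p 3 - (p 8 - p 9) = 0 := by linear_combination k₂ + b₁
  have c₃ : p 0 - p 1 - p 2 + p 3 - (p 11 - p 12) = 0 := by linear_combination k₃ + b₂
  fin_cases i <;> assumption

theorem mem_kerSet_iff {X : Set (Fin 13 → ZMod 3)} {p : Fin 13 → ZMod 3} :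
    p ∈ kerSet (ZMod 3) X ↔ ∀ a : ZMod 3, ∀ c ∈ X, c + a • p ∈ X := by
  refine ⟨fun h a c hc => (h a).subset (Set.mem_image_of_mem _ hc), fun h a => ?_⟩
  refine Set.Subset.antisymm (Set.image_subset_iff.2 fun c hc => h a c hc) fun c hc => ?_
  exact ⟨c + (-a) • p, h (-a) c hc, by simp⟩

theorem mem_kerSet_code {e₀ e₁ e₂ e₃ : ZMod 3} (h₀ : e₀ = 0 ∨ e₀ = 1)
    (h₁ : e₁ = 0 ∨ e₁ = 1) (h₂ : e₂ = 0 ∨ e₂ = 1) (h₃ : e₃ = 0 ∨ e₃ = 1)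
    {p : Fin 13 → ZMod 3} : p ∈ kerSet (ZMod 3) (code e₀ e₁ e₂ e₃) ↔
      (∀ i : Fin 6, checkMap p (Fin.castLE (by simp) i) = 0) ∧
      e₁ * checkMap p 6 = 0 ∧ e₂ * checkMap p 7 = 0 ∧ e₃ * checkMap p 8 = 0 ∧
      e₀ * checkMap p 9 = 0 := by
  rw [mem_kerSet_iff]
  refine ⟨fun h => checkMap_of_add_mem_code h₀ h₁ h₂ h₃ (by simpa using h 1), ?_⟩
  rintro ⟨hp, hp₁, hp₂, hp₃, hp₀⟩ a c hc
  refine add_mem_code (fun i => ?_) ?_ ?_ ?_ ?_ hc <;>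
    simp only [map_smul, Pi.smul_apply, smul_eq_mul, mul_left_comm _ a, hp, hp₁, hp₂, hp₃, hp₀,
      mul_zero]

theorem kerDim_eq_of_mem_kerSet_iff {X : Set (Fin 13 → ZMod 3)} {r : ℕ} (hr : r ≤ 10)
    (h : ∀ p, p ∈ kerSet (ZMod 3) X ↔ ∀ i : Fin r, checkMap p (Fin.castLE hr i) = 0) :
    kerDim (ZMod 3) X = 13 - r := by
  have hX : kerSet (ZMod 3) X =
      LinearMap.ker (LinearMap.funLeft (ZMod 3) (ZMod 3) (Fin.castLE hr) ∘ₗ checkMap) := by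
    ext p
    rw [h, SetLike.mem_coe, LinearMap.mem_ker, funext_iff]
    rfl
  rw [kerDim, hX, Submodule.span_eq, finrank_ker_checkMap]

end TernaryPerfect

open TernaryPerfect in
theorem statement7 :
    ∀ k ∈ ({3, 4, 5, 6, 7} : Set ℕ),
      ∃ C : Set (Fin 13 → ZMod 3),
        IsTiling (hammingBall1 (ZMod 3) 13) C ∧
        affineSpan (ZMod 3) C = ⊤ ∧
        kerDim (ZMod 3) C = k := by
  have h0 : (0 : ZMod 3) = 0 ∨ (0 : ZMod 3) = 1 := .inl rfl
  have h1 : (1 : ZMod 3) = 0 ∨ (1 : ZMod 3) = 1 := .inr rfl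
  rintro k (rfl | rfl | rfl | rfl | rfl)
  · refine ⟨code 1 1 1 1, isTiling_code h1 h1 h1 h1, affineSpan_code .., ?_⟩
    refine kerDim_eq_of_mem_kerSet_iff (r := 10) (by simp) fun p => ?_
    rw [mem_kerSet_code h1 h1 h1 h1]
    simp [Fin.forall_fin_succ, and_assoc]
  · refine ⟨code 0 1 1 1, isTiling_code h0 h1 h1 h1, affineSpan_code .., ?_⟩
    refine kerDim_eq_of_mem_kerSet_iff (r := 9) (by simp) fun p => ?_
    rw [mem_kerSet_code h0 h1 h1 h1]
    simp [Fin.forall_fin_succ, and_assoc]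
  · refine ⟨code 0 1 1 0, isTiling_code h0 h1 h1 h0, affineSpan_code .., ?_⟩
    refine kerDim_eq_of_mem_kerSet_iff (r := 8) (by simp) fun p => ?_
    rw [mem_kerSet_code h0 h1 h1 h0]
    simp [Fin.forall_fin_succ, and_assoc]
  · refine ⟨code 0 1 0 0, isTiling_code h0 h1 h0 h0, affineSpan_code .., ?_⟩
    refine kerDim_eq_of_mem_kerSet_iff (r := 7) (by simp) fun p => ?_
    rw [mem_kerSet_code h0 h1 h0 h0]
    simp [Fin.forall_fin_succ, and_assoc]
  · refine ⟨code 0 0 0 0, isTiling_code h0 h0 h0 h0, affineSpan_code .., ?_⟩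
    refine kerDim_eq_of_mem_kerSet_iff (r := 6) (by simp) fun p => ?_
    rw [mem_kerSet_code h0 h0 h0 h0]
    simp
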